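/- arXiv:1712.04549 — 2 statements merged into one kernel-verified Lean document; each statement's English description precedes it below -/
import Mathlib

section
/- For every positive integer k, the graph 𝒬_k is outerplanar; consequently neither K_4 nor K_{2,3} is a minor of 𝒬_k. -/
/-!
Common definitions: minors, widths, connectivity, the specific graphs
`K4`, `K23`, `C32`, `graphA`, the binary trees `CT_h`, the graphs `𝒫_k`, `𝒬_k`,
the trees `T_h`, homeomorphic embeddings, cascades, and related notions,
following Dang--Thomas, "Minors of two-connected graphs of large path-width".
-/

open SimpleGraph

/-- A minor model of `H` in `G`: branch sets `f w` are nonempty, connected,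
pairwise disjoint, and edges of `H` are realized by edges of `G` between branch sets. -/
def IsMinorModel {W V : Type*} (H : SimpleGraph W) (G : SimpleGraph V) (f : W → Set V) : Prop :=
  (∀ w, (f w).Nonempty) ∧
  (∀ w, (G.induce (f w)).Connected) ∧
  (∀ w₁ w₂ : W, w₁ ≠ w₂ → Disjoint (f w₁) (f w₂)) ∧
  (∀ w₁ w₂ : W, H.Adj w₁ w₂ → ∃ v₁ ∈ f w₁, ∃ v₂ ∈ f w₂, G.Adj v₁ v₂)

/-- `H` is (isomorphic to) a minor of `G`. -/
def IsMinor {W V : Type*} (H : SimpleGraph W) (G : SimpleGraph V) : Prop :=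
  ∃ f : W → Set V, IsMinorModel H G f

/-- The complete graph on four vertices. -/
def K4 : SimpleGraph (Fin 4) := ⊤

/-- The complete bipartite graph `K_{2,3}`. -/
def K23 : SimpleGraph (Fin 2 ⊕ Fin 3) := completeBipartiteGraph (Fin 2) (Fin 3)

/-- The graph `A`: a cycle `a₁a₂a₃a₄a₅a₆a₁` plus the edges `a₁a₃`, `a₃a₅`, `a₅a₁`. -/
def graphA : SimpleGraph (Fin 6) :=
  SimpleGraph.fromEdgeSet
    {s(0, 1), s(1, 2), s(2, 3), s(3, 4), s(4, 5), s(5, 0), s(0, 2), s(2, 4), s(4, 0)}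

/-- The graph `C_{3,2}`: two disjoint triangles. -/
def C32 : SimpleGraph (Fin 2 × Fin 3) :=
  SimpleGraph.fromRel (fun u v => u.1 = v.1)

/-- A graph is outerplanar iff it has no `K₄` minor and no `K_{2,3}` minor
(the classical characterization of outerplanarity). -/
def Outerplanar {V : Type*} (G : SimpleGraph V) : Prop :=
  ¬ IsMinor K4 G ∧ ¬ IsMinor K23 G

/-- `G` is `k`-connected: it has more than `k` vertices and deleting fewer than `k`
vertices leaves a connected graph. -/
def IsKConnected {V : Type*} [Fintype V] (k : ℕ) (G : SimpleGraph V) : Prop :=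
  k + 1 ≤ Fintype.card V ∧
  ∀ S : Finset V, S.card < k → (G.induce ((↑S : Set V)ᶜ)).Connected

/-- `(Tr, X)` is a tree-decomposition of `G`: `Tr` is a tree, the bags `X t` cover all
vertices and edges (W1), and whenever `t₂` lies on the path of `Tr` between `t₁` and `t₃`
we have `X t₁ ∩ X t₃ ⊆ X t₂` (W2). -/
def IsTreeDecomp {V T : Type*} (G : SimpleGraph V) (Tr : SimpleGraph T) (X : T → Finset V) :
    Prop :=
  Tr.IsTree ∧
  (∀ v : V, ∃ t, v ∈ X t) ∧
  (∀ u v : V, G.Adj u v → ∃ t, u ∈ X t ∧ v ∈ X t) ∧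
  (∀ (t₁ t₂ t₃ : T) (p : Tr.Walk t₁ t₃), p.IsPath → t₂ ∈ p.support →
    ∀ v : V, v ∈ X t₁ → v ∈ X t₃ → v ∈ X t₂)

/-- A path-decomposition of `G`, with bags indexed by `Fin n`. -/
def IsPathDecomp {V : Type*} (G : SimpleGraph V) {n : ℕ} (X : Fin n → Finset V) : Prop :=
  (∀ v : V, ∃ i, v ∈ X i) ∧
  (∀ u v : V, G.Adj u v → ∃ i, u ∈ X i ∧ v ∈ X i) ∧
  (∀ i j k : Fin n, i ≤ j → j ≤ k → ∀ v : V, v ∈ X i → v ∈ X k → v ∈ X j)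

/-- The path-width of a finite graph: the least `w` such that `G` has a
path-decomposition all of whose bags have at most `w + 1` vertices. -/
noncomputable def pathwidth {V : Type*} [Fintype V] (G : SimpleGraph V) : ℕ :=
  sInf {w | ∃ (n : ℕ) (X : Fin n → Finset V), IsPathDecomp G X ∧ ∀ i, (X i).card ≤ w + 1}

/-- The tree-width of a finite graph: the least `w` such that `G` has a
tree-decomposition all of whose bags have at most `w + 1` vertices. -/
noncomputable def treewidth {V : Type*} [Fintype V] (G : SimpleGraph V) : ℕ :=
  sInf {w | ∃ (T : Type) (_ : Fintype T) (Tr : SimpleGraph T) (X : T → Finset V),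
    IsTreeDecomp G Tr X ∧ ∀ t, (X t).card ≤ w + 1}

/-- Vertices of the binary tree `CT_h`: paths from the root, recorded as reversed
lists of left/right moves, of length at most `h`. -/
abbrev CTVert (h : ℕ) := {l : List Bool // l.length ≤ h}

/-- The binary tree `CT_h` of height `h`. -/
def CTgraph (h : ℕ) : SimpleGraph (CTVert h) :=
  SimpleGraph.fromEdgeSet
    {e | ∃ (b : Bool) (σ : List Bool) (hσ : σ.length < h),
      e = s((⟨σ, le_of_lt hσ⟩ : CTVert h), (⟨b :: σ, by simpa using hσ⟩ : CTVert h))}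

/-- The graph `𝒫_k`: the binary tree `CT_k` together with one extra vertex (`none`)
adjacent to every leaf of `CT_k`. -/
def Pgraph (k : ℕ) : SimpleGraph (Option (CTVert k)) :=
  SimpleGraph.fromEdgeSet
    ({e | ∃ (b : Bool) (σ : List Bool) (hσ : σ.length < k),
        e = s(some (⟨σ, le_of_lt hσ⟩ : CTVert k), some (⟨b :: σ, by simpa using hσ⟩ : CTVert k))} ∪
     {e | ∃ l : CTVert k, l.1.length = k ∧ e = s(none, some l)})

/-- Vertices of `𝒬_k`: the two base vertices of the root triangle (`Sum.inl false` and
`Sum.inl true`), together with one apex vertex for each node of the complete binary tree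
of depth `< k` (recorded as a reversed list of moves). -/
abbrev QVert (k : ℕ) := Bool ⊕ {l : List Bool // l.length < k}

/-- The two ends of the base edge of the copy of the triangle at node `σ` of `𝒬_k`. -/
def qbase (k : ℕ) : List Bool → QVert k × QVert k
  | [] => (Sum.inl false, Sum.inl true)
  | b :: σ =>
      ((if b then (qbase k σ).2 else (qbase k σ).1),
        if h : σ.length < k then Sum.inr ⟨σ, h⟩ else Sum.inl false)

/-- The graph `𝒬_k`, built from triangles as in the recursive definition: the triangle at
node `σ` consists of the base edge `qbase k σ` together with the apex vertex `Sum.inr σ`;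
the base edge of `𝒬_k` is `s(Sum.inl false, Sum.inl true)`. -/
def Qgraph (k : ℕ) : SimpleGraph (QVert k) :=
  SimpleGraph.fromEdgeSet
    ({s(Sum.inl false, Sum.inl true)} ∪
     {e | ∃ (σ : List Bool) (h : σ.length < k),
        e = s(Sum.inr ⟨σ, h⟩, (qbase k σ).1) ∨ e = s(Sum.inr ⟨σ, h⟩, (qbase k σ).2)})

/-- The minor vertices of the tree `T_h` (one for each string of length `≤ h`). -/
abbrev MVert (h : ℕ) := {l : List Bool // l.length ≤ h}

/-- The major vertices of the tree `T_h` (one for each string of length `≤ h - 1`). -/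
abbrev JVert (h : ℕ) := {l : List Bool // l.length + 1 ≤ h}

/-- Vertices of the tree `T_h` (obtained from `CT_h` by subdividing every edge not incident
with a degree-one vertex and adding the minor root). -/
abbrev TVert (h : ℕ) := MVert h ⊕ JVert h

/-- The tree `T_h`: each major vertex `σ` is adjacent to the minor vertices `σ` (its parent),
`false :: σ` (its left neighbor) and `true :: σ` (its right neighbor). -/
def Tgraph (h : ℕ) : SimpleGraph (TVert h) :=
  SimpleGraph.fromEdgeSet
    {e | ∃ (σ : List Bool) (hσ : σ.length + 1 ≤ h),
      e = s(Sum.inr ⟨σ, hσ⟩, Sum.inl ⟨σ, Nat.le_of_succ_le hσ⟩) ∨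
      ∃ b : Bool, e = s(Sum.inr ⟨σ, hσ⟩, Sum.inl ⟨b :: σ, by simpa using hσ⟩)}

/-- A homeomorphic embedding of `TA` into `TB`: an injection such that for any two edges of
`TA` sharing an end `t`, the corresponding paths of `TB` are edge-disjoint. -/
def IsHomeoEmb {A B : Type*} (TA : SimpleGraph A) (TB : SimpleGraph B) (η : A → B) : Prop :=
  Function.Injective η ∧
  ∀ ⦃t t₁ t₂ : A⦄, TA.Adj t t₁ → TA.Adj t t₂ → t₁ ≠ t₂ →
    ∀ (p₁ : TB.Walk (η t) (η t₁)) (p₂ : TB.Walk (η t) (η t₂)),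
      p₁.IsPath → p₂.IsPath → ∀ e ∈ p₁.edges, e ∉ p₂.edges

/-- `v` lies in the span of `η`: it lies on a path of `TB` between two vertices in the
image of `η`. -/
def inSpan {A B : Type*} (TB : SimpleGraph B) (η : A → B) (v : B) : Prop :=
  ∃ (a₁ a₂ : A) (p : TB.Walk (η a₁) (η a₂)), p.IsPath ∧ v ∈ p.support

/-- A cascade of height `h` and size `s` in the tree-decomposition `(Tr, X)`:
a homeomorphic embedding of `T_h` with `|X (η t)| = s` for every minor vertex `t`
and `|X t| ≥ s` for every `t` in the span. -/
def IsCascade {V T : Type*} (Tr : SimpleGraph T) (X : T → Finset V) (h s : ℕ)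
    (η : TVert h → T) : Prop :=
  IsHomeoEmb (Tgraph h) Tr η ∧
  (∀ l : MVert h, (X (η (Sum.inl l))).card = s) ∧
  (∀ t : T, inSpan Tr η t → s ≤ (X t).card)

/-- An injective cascade with common intersection set `I`. -/
def IsInjectiveCascade {V T : Type*} (Tr : SimpleGraph T) (X : T → Finset V) (h s : ℕ)
    (η : TVert h → T) (I : Finset V) : Prop :=
  IsCascade Tr X h s η ∧ I.card < s ∧
  ∀ t t' : TVert h, t ≠ t' → ((X (η t) : Set V) ∩ (X (η t') : Set V)) = (I : Set V)

/-- A family of `s` disjoint paths in `G \ I` (a linkage). -/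
def IsLinkage {V : Type*} (G : SimpleGraph V) (I : Finset V) {s : ℕ} {x y : Fin s → V}
    (P : ∀ i : Fin s, G.Walk (x i) (y i)) : Prop :=
  (∀ i, (P i).IsPath) ∧
  (∀ i, ∀ v ∈ (P i).support, v ∉ I) ∧
  (∀ i j, i ≠ j → ∀ v ∈ (P i).support, v ∉ (P j).support)

/-- An ordered cascade: an injective cascade of size `s + |I|` with common intersection set
`I`, together with orderings `ξ t : Fin s → X (η t) \ I` of the bags at minor vertices, such
that at every major vertex there are left and right linkages connecting corresponding
vertices. -/
def IsOrderedCascade {V T : Type*} (G : SimpleGraph V) (Tr : SimpleGraph T)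
    (X : T → Finset V) (h s : ℕ) (η : TVert h → T) (I : Finset V)
    (ξ : MVert h → Fin s → V) : Prop :=
  IsInjectiveCascade Tr X h (s + I.card) η I ∧
  (∀ t : MVert h, Function.Injective (ξ t) ∧
    Set.range (ξ t) = (X (η (Sum.inl t)) : Set V) \ (I : Set V)) ∧
  ∀ (σ : List Bool) (hσ : σ.length + 1 ≤ h),
    (∃ P : ∀ i : Fin s,
        G.Walk (ξ ⟨σ, Nat.le_of_succ_le hσ⟩ i) (ξ ⟨false :: σ, by simpa using hσ⟩ i),
      IsLinkage G I P) ∧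
    (∃ Q : ∀ i : Fin s,
        G.Walk (ξ ⟨σ, Nat.le_of_succ_le hσ⟩ i) (ξ ⟨true :: σ, by simpa using hσ⟩ i),
      IsLinkage G I Q)

/-- The vertex set of the `η`-torso at the major vertex `σ` of `T_h`: the union of the bags
`X t - I` over all `t` such that the path in `Tr` from `t` to `η σ` contains none of the
images of the three minor neighbors of `σ` as an internal vertex. -/
def torsoSet {V T : Type*} (Tr : SimpleGraph T) (X : T → Finset V) {h : ℕ}
    (η : TVert h → T) (I : Finset V) (σ : List Bool) (hσ : σ.length + 1 ≤ h) : Set V :=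
  {v | v ∉ I ∧ ∃ t : T,
    (∀ p : Tr.Walk t (η (Sum.inr ⟨σ, hσ⟩)), p.IsPath →
      ∀ u : T,
        (u = η (Sum.inl ⟨σ, Nat.le_of_succ_le hσ⟩) ∨
         u = η (Sum.inl ⟨false :: σ, by simpa using hσ⟩) ∨
         u = η (Sum.inl ⟨true :: σ, by simpa using hσ⟩)) →
        u ∈ p.support → u = t ∨ u = η (Sum.inr ⟨σ, hσ⟩)) ∧
    v ∈ X t}

/-- `H` is a tripod in `G` with all vertices in `S`, center `c` and feet `f₁, f₂, f₃`:
the union of three paths from `c` to the feet, pairwise disjoint except for `c`,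
at least two of which have length at least one. -/
def IsTripodOn {V : Type*} (G : SimpleGraph V) (S : Set V) (H : G.Subgraph)
    (c f₁ f₂ f₃ : V) : Prop :=
  ∃ (W₁ : G.Walk c f₁) (W₂ : G.Walk c f₂) (W₃ : G.Walk c f₃),
    W₁.IsPath ∧ W₂.IsPath ∧ W₃.IsPath ∧
    (∀ v ∈ W₁.support, v ∈ S) ∧ (∀ v ∈ W₂.support, v ∈ S) ∧ (∀ v ∈ W₃.support, v ∈ S) ∧
    (∀ v, v ∈ W₁.support → v ∈ W₂.support → v = c) ∧
    (∀ v, v ∈ W₁.support → v ∈ W₃.support → v = c) ∧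
    (∀ v, v ∈ W₂.support → v ∈ W₃.support → v = c) ∧
    ((1 ≤ W₁.length ∧ 1 ≤ W₂.length) ∨ (1 ≤ W₁.length ∧ 1 ≤ W₃.length) ∨
      (1 ≤ W₂.length ∧ 1 ≤ W₃.length)) ∧
    H = W₁.toSubgraph ⊔ W₂.toSubgraph ⊔ W₃.toSubgraph

/-- The major vertex `σ` has property `A_{ij}` in the ordered cascade `η` with orderings
`ξ`: there are two disjoint tripods in the `η`-torso at `σ`, with feet as prescribed. -/
def HasPropA {V T : Type*} (G : SimpleGraph V) (Tr : SimpleGraph T) (X : T → Finset V)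
    {h s : ℕ} (η : TVert h → T) (I : Finset V) (ξ : MVert h → Fin s → V)
    (σ : List Bool) (hσ : σ.length + 1 ≤ h) (i j : Fin s) : Prop :=
  ∃ (Li Lj : G.Subgraph) (ci cj : V),
    (∃ m₂ m₃ : Fin s, (m₂ = i ∨ m₂ = j) ∧ (m₃ = i ∨ m₃ = j) ∧
      IsTripodOn G (torsoSet Tr X η I σ hσ) Li ci
        (ξ ⟨σ, Nat.le_of_succ_le hσ⟩ i)
        (ξ ⟨false :: σ, by simpa using hσ⟩ m₂)
        (ξ ⟨true :: σ, by simpa using hσ⟩ m₃)) ∧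
    (∃ m₂ m₃ : Fin s, (m₂ = i ∨ m₂ = j) ∧ (m₃ = i ∨ m₃ = j) ∧
      IsTripodOn G (torsoSet Tr X η I σ hσ) Lj cj
        (ξ ⟨σ, Nat.le_of_succ_le hσ⟩ j)
        (ξ ⟨false :: σ, by simpa using hσ⟩ m₂)
        (ξ ⟨true :: σ, by simpa using hσ⟩ m₃)) ∧
    Disjoint Li.verts Lj.verts

/-- The major vertex `σ` has property `B_{ij}`: there are two tripods `L_i`, `L_j` in the
`η`-torso at `σ`, with feet `v_{m,1}, v_{m,2}, v_{m,3}` where `{v_{i,y}, v_{j,y}}` equals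
`{ξ_{t_y} i, ξ_{t_y} j}` for each `y`, which intersect exactly in a path that is the
intersection of the branch of `L_i` to `v_{i,3}` and the branch of `L_j` to `v_{j,2}`,
and which avoids both centers. -/
def HasPropB {V T : Type*} (G : SimpleGraph V) (Tr : SimpleGraph T) (X : T → Finset V)
    {h s : ℕ} (η : TVert h → T) (I : Finset V) (ξ : MVert h → Fin s → V)
    (σ : List Bool) (hσ : σ.length + 1 ≤ h) (i j : Fin s) : Prop :=
  ∃ (vi vj : Fin 3 → V) (ci cj : V)
    (Wi : ∀ y : Fin 3, G.Walk ci (vi y)) (Wj : ∀ y : Fin 3, G.Walk cj (vj y)),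
    (∀ y : Fin 3, ({vi y, vj y} : Set V) =
      {(![ξ ⟨σ, Nat.le_of_succ_le hσ⟩,
          ξ ⟨false :: σ, by simpa using hσ⟩,
          ξ ⟨true :: σ, by simpa using hσ⟩] : Fin 3 → Fin s → V) y i,
       (![ξ ⟨σ, Nat.le_of_succ_le hσ⟩,
          ξ ⟨false :: σ, by simpa using hσ⟩,
          ξ ⟨true :: σ, by simpa using hσ⟩] : Fin 3 → Fin s → V) y j}) ∧
    (∀ y, (Wi y).IsPath) ∧ (∀ y, (Wj y).IsPath) ∧
    (∀ y, ∀ v ∈ (Wi y).support, v ∈ torsoSet Tr X η I σ hσ) ∧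
    (∀ y, ∀ v ∈ (Wj y).support, v ∈ torsoSet Tr X η I σ hσ) ∧
    (∀ y y' : Fin 3, y ≠ y' → ∀ v, v ∈ (Wi y).support → v ∈ (Wi y').support → v = ci) ∧
    (∀ y y' : Fin 3, y ≠ y' → ∀ v, v ∈ (Wj y).support → v ∈ (Wj y').support → v = cj) ∧
    ((1 ≤ (Wi 0).length ∧ 1 ≤ (Wi 1).length) ∨ (1 ≤ (Wi 0).length ∧ 1 ≤ (Wi 2).length) ∨
      (1 ≤ (Wi 1).length ∧ 1 ≤ (Wi 2).length)) ∧
    ((1 ≤ (Wj 0).length ∧ 1 ≤ (Wj 1).length) ∨ (1 ≤ (Wj 0).length ∧ 1 ≤ (Wj 2).length) ∨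
      (1 ≤ (Wj 1).length ∧ 1 ≤ (Wj 2).length)) ∧
    (((Wi 0).toSubgraph ⊔ (Wi 1).toSubgraph ⊔ (Wi 2).toSubgraph) ⊓
      ((Wj 0).toSubgraph ⊔ (Wj 1).toSubgraph ⊔ (Wj 2).toSubgraph)
        = (Wi 2).toSubgraph ⊓ (Wj 1).toSubgraph) ∧
    ∃ (x y : V) (p : G.Walk x y), p.IsPath ∧
      (Wi 2).toSubgraph ⊓ (Wj 1).toSubgraph = p.toSubgraph ∧
      ci ∉ p.support ∧ cj ∉ p.support

/-- The major vertex `σ` has property `AB_{ij}`: in the `η`-torso at `σ` there are disjoint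
paths `L_i, L_j` from `ξ_{t₁}(m)` to `ξ_{t₂}(m)` and disjoint paths `R_i, R_j` from
`ξ_{t₁}(m)` to `ξ_{t₃}(m)`, for `m ∈ {i, j}`. -/
def HasPropAB {V T : Type*} (G : SimpleGraph V) (Tr : SimpleGraph T) (X : T → Finset V)
    {h s : ℕ} (η : TVert h → T) (I : Finset V) (ξ : MVert h → Fin s → V)
    (σ : List Bool) (hσ : σ.length + 1 ≤ h) (i j : Fin s) : Prop :=
  ∃ (Li : G.Walk (ξ ⟨σ, Nat.le_of_succ_le hσ⟩ i) (ξ ⟨false :: σ, by simpa using hσ⟩ i))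
    (Lj : G.Walk (ξ ⟨σ, Nat.le_of_succ_le hσ⟩ j) (ξ ⟨false :: σ, by simpa using hσ⟩ j))
    (Ri : G.Walk (ξ ⟨σ, Nat.le_of_succ_le hσ⟩ i) (ξ ⟨true :: σ, by simpa using hσ⟩ i))
    (Rj : G.Walk (ξ ⟨σ, Nat.le_of_succ_le hσ⟩ j) (ξ ⟨true :: σ, by simpa using hσ⟩ j)),
    Li.IsPath ∧ Lj.IsPath ∧ Ri.IsPath ∧ Rj.IsPath ∧
    (∀ v ∈ Li.support, v ∈ torsoSet Tr X η I σ hσ) ∧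
    (∀ v ∈ Lj.support, v ∈ torsoSet Tr X η I σ hσ) ∧
    (∀ v ∈ Ri.support, v ∈ torsoSet Tr X η I σ hσ) ∧
    (∀ v ∈ Rj.support, v ∈ torsoSet Tr X η I σ hσ) ∧
    (∀ v ∈ Li.support, v ∉ Lj.support) ∧
    (∀ v ∈ Ri.support, v ∉ Rj.support)

/-- A monotone homeomorphic embedding `T_a ↪ T_h`: the minor root maps to the minor root,
and for every major vertex with trinity `(t₁, t₂, t₃)`, the images of `t₂` and `t₃` are the
left and right neighbors of the (major) image of the vertex. -/
def IsMonotoneEmb (a h : ℕ) (γ : TVert a → TVert h) : Prop :=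
  IsHomeoEmb (Tgraph a) (Tgraph h) γ ∧
  γ (Sum.inl ⟨[], Nat.zero_le a⟩) = Sum.inl ⟨[], Nat.zero_le h⟩ ∧
  ∀ (σ : List Bool) (hσ : σ.length + 1 ≤ a),
    ∃ (τ : List Bool) (hτ : τ.length + 1 ≤ h),
      γ (Sum.inr ⟨σ, hσ⟩) = Sum.inr ⟨τ, hτ⟩ ∧
      γ (Sum.inl ⟨false :: σ, by simpa using hσ⟩) = Sum.inl ⟨false :: τ, by simpa using hτ⟩ ∧
      γ (Sum.inl ⟨true :: σ, by simpa using hσ⟩) = Sum.inl ⟨true :: τ, by simpa using hτ⟩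

/-!
Place the vertices of `𝒬_k` on a line: the base edge of `𝒬_k` spans `(0, 1)`, and the apex of each
triangle sits at the midpoint of the span of its base edge. Every edge is the base edge of some
triangle, and the spans of the base edges form a laminar family, so no two edges cross.

A graph drawn in this way has no `K₄` and no `K_{2,3}` minor. Such layouts pass to minors, by
placing each branch set at any one of its vertices: disjoint connected sets cannot interleave on the
line. Four vertices in a row cannot be pairwise adjacent, since the first-third and second-fourth
edges would cross; and of three common neighbours of `a` and `a'`, two lie on the same side of the
pair `a, a'`, which again forces a crossing.
-/

section OnePageLayout

variable {V W α : Type*} [LinearOrder α] {G : SimpleGraph V} {H : SimpleGraph W} {f : V → α}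

/-- A one-page book embedding of `G`: its vertices are placed at distinct points `f v` of a line,
and its edges, drawn as arcs on one side of the line, do not cross. -/
structure IsOnePageLayout (G : SimpleGraph V) (f : V → α) : Prop where
  injective : Function.Injective f
  not_cross : ∀ ⦃u v x y⦄, G.Adj u v → G.Adj x y → f u < f x → f x < f v → ¬ f v < f y

theorem exists_adj_mem_notMem_of_connected_induce {S : Set V} (hS : (G.induce S).Connected)
    (A : Set V) {a b : V} (ha : a ∈ S) (hb : b ∈ S) (haA : a ∈ A) (hbA : b ∉ A) :
    ∃ x ∈ S, ∃ y ∈ S, G.Adj x y ∧ x ∈ A ∧ y ∉ A := by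
  obtain ⟨p⟩ := hS.preconnected ⟨a, ha⟩ ⟨b, hb⟩
  obtain ⟨d, -, hfst, hsnd⟩ := p.exists_boundary_dart (Subtype.val ⁻¹' A) haA hbA
  exact ⟨d.fst, d.fst.2, d.snd, d.snd.2, d.adj, hfst, hsnd⟩

namespace IsOnePageLayout

theorem mem_Icc_of_adj (hf : IsOnePageLayout G f) {u v x y : V} (huv : G.Adj u v)
    (hxy : G.Adj x y) (hx : f x ∈ Set.Ioo (f u) (f v)) : f y ∈ Set.Icc (f u) (f v) :=
  ⟨not_lt.1 fun hy => hf.not_cross hxy.symm huv hy hx.1 hx.2,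
    not_lt.1 (hf.not_cross huv hxy hx.1 hx.2)⟩

theorem mem_Ioo_of_connected (hf : IsOnePageLayout G f) {T : Set V}
    (hT : (G.induce T).Connected) {x y s t : V} (hxy : G.Adj x y) (hx : x ∉ T) (hy : y ∉ T)
    (hs : s ∈ T) (ht : t ∈ T) (hsxy : f s ∈ Set.Ioo (f x) (f y)) :
    f t ∈ Set.Ioo (f x) (f y) := by
  by_contra htxy
  obtain ⟨p, -, q, hq, hpq, hp, hq'⟩ :=
    exists_adj_mem_notMem_of_connected_induce hT (f ⁻¹' Set.Ioo (f x) (f y)) hs ht hsxy htxy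
  have hqxy := hf.mem_Icc_of_adj hxy hpq hp
  have hxq : f x ≠ f q := hf.injective.ne (ne_of_mem_of_not_mem hq hx).symm
  have hqy : f q ≠ f y := hf.injective.ne (ne_of_mem_of_not_mem hq hy)
  exact hq' ⟨hqxy.1.lt_of_ne hxq, hqxy.2.lt_of_ne hqy⟩

theorem not_interleave_of_connected (hf : IsOnePageLayout G f) {S T : Set V}
    (hS : (G.induce S).Connected) (hT : (G.induce T).Connected) (hST : Disjoint S T)
    {s s' t t' : V} (hs : s ∈ S) (hs' : s' ∈ S) (ht : t ∈ T) (ht' : t' ∈ T)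
    (hst : f s < f t) (hts' : f t < f s') : ¬ f s' < f t' := by
  intro hst'
  have hT_of_mem {x : V} (hx : x ∈ S) : x ∉ T := Set.disjoint_left.1 hST hx
  have hne {x z : V} (hx : x ∈ S) (hz : z ∈ T) : f x ≠ f z :=
    hf.injective.ne (ne_of_mem_of_not_mem hz (hT_of_mem hx)).symm
  -- An edge of `S` leaves the interval between `t` and `t'`, hence separates `t` from `t'`.
  obtain ⟨x, hx, y, hy, hxy, ⟨htx, hxt'⟩, hytt'⟩ :=
    exists_adj_mem_notMem_of_connected_induce hS (f ⁻¹' Set.Ioo (f t) (f t')) hs' hs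
      ⟨hts', hst'⟩ fun h => h.1.not_gt hst
  rcases (hne hy ht).lt_or_gt with hyt | hty
  · have := hf.mem_Ioo_of_connected hT hxy.symm (hT_of_mem hy) (hT_of_mem hx) ht ht' ⟨hyt, htx⟩
    exact this.2.not_gt hxt'
  · have ht'y : f t' < f y :=
      (not_lt.1 fun hyt' => hytt' ⟨hty, hyt'⟩).lt_of_ne (hne hy ht').symm
    have := hf.mem_Ioo_of_connected hT hxy (hT_of_mem hx) (hT_of_mem hy) ht' ht ⟨hxt', ht'y⟩
    exact this.1.not_gt htx

theorem comp_of_isMinorModel (hf : IsOnePageLayout G f) {B : W → Set V}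
    (hB : IsMinorModel H G B) {r : W → V} (hr : ∀ w, r w ∈ B w) :
    IsOnePageLayout H (f ∘ r) := by
  obtain ⟨-, hconn, hdisj, hadj⟩ := hB
  have hunion {a b : W} (hab : H.Adj a b) : (G.induce (B a ∪ B b)).Connected := by
    obtain ⟨u, hu, v, hv, huv⟩ := hadj a b hab
    exact connected_induce_union (hconn a).preconnected (hconn b).preconnected hu hv huv
  refine ⟨hf.injective.comp fun a b hab => ?_, fun a b c d hab hcd hac hcb hbd => ?_⟩
  · by_contra hne
    exact Set.disjoint_left.1 (hdisj a b hne) (hr a) (hab ▸ hr b)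
  · have hdisj_of_lt {i j : W} (hij : f (r i) < f (r j)) : Disjoint (B i) (B j) :=
      hdisj i j fun h => hij.ne (h ▸ rfl)
    have hST : Disjoint (B a ∪ B b) (B c ∪ B d) := by
      simp only [Set.disjoint_union_left, Set.disjoint_union_right]
      exact ⟨⟨hdisj_of_lt hac, (hdisj_of_lt hcb).symm⟩,
        hdisj_of_lt (hac.trans (hcb.trans hbd)), hdisj_of_lt hbd⟩
    exact hf.not_interleave_of_connected (hunion hab) (hunion hcd) hST (Or.inl (hr a))
      (Or.inr (hr b)) (Or.inl (hr c)) (Or.inr (hr d)) hac hcb hbd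

theorem exists_of_isMinor (hf : IsOnePageLayout G f) (hH : IsMinor H G) :
    ∃ g : W → α, IsOnePageLayout H g := by
  obtain ⟨B, hB⟩ := hH
  choose r hr using hB.1
  exact ⟨f ∘ r, hf.comp_of_isMinorModel hB hr⟩

theorem cliqueFree_four (hf : IsOnePageLayout G f) : G.CliqueFree 4 := by
  by_contra hG
  obtain ⟨φ⟩ := (not_cliqueFree_iff_top_isContained 4).1 hG
  let σ : Equiv.Perm (Fin 4) := Tuple.sort (f ∘ φ)
  have hσ : StrictMono (f ∘ φ ∘ σ) := (Tuple.monotone_sort (f ∘ φ)).strictMono_of_injective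
    ((hf.injective.comp φ.injective).comp σ.injective)
  have hadj {i j : Fin 4} (hij : i ≠ j) : G.Adj (φ (σ i)) (φ (σ j)) :=
    φ.toHom.map_adj (σ.injective.ne hij)
  exact hf.not_cross (hadj (by decide : (0 : Fin 4) ≠ 2)) (hadj (by decide : (1 : Fin 4) ≠ 3))
    (hσ (by decide)) (hσ (by decide)) (hσ (by decide))

theorem eq_of_mem_commonNeighbors (hf : IsOnePageLayout G f) {a a' b b' : V} (ha : a ≠ a')
    (hb : b ∈ G.commonNeighbors a a') (hb' : b' ∈ G.commonNeighbors a a')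
    (hside : f b ∈ Set.uIoo (f a) (f a') ↔ f b' ∈ Set.uIoo (f a) (f a')) : b = b' := by
  wlog haa' : f a < f a' generalizing a a'
  · exact this ha.symm (G.commonNeighbors_symm a a' ▸ hb) (G.commonNeighbors_symm a a' ▸ hb')
      (by rwa [Set.uIoo_comm (f a')])
      ((hf.injective.ne ha).lt_or_gt.resolve_left haa')
  by_contra hbb'
  wlog hlt : f b < f b' generalizing b b'
  · exact this hb' hb hside.symm (Ne.symm hbb')
      ((hf.injective.ne hbb').lt_or_gt.resolve_left hlt)
  obtain ⟨hab, ha'b⟩ := hb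
  obtain ⟨hab', ha'b'⟩ := hb'
  have hne {x y : V} (hxy : G.Adj x y) : f x ≠ f y := hf.injective.ne hxy.ne
  rw [Set.uIoo_of_lt haa', Set.mem_Ioo, Set.mem_Ioo] at hside
  rcases (hne hab).lt_or_gt with h₁ | h₁
  · rcases (hne ha'b).lt_or_gt with h₂ | h₂
    · exact hf.not_cross hab ha'b' haa' h₂ hlt
    · exact hf.not_cross hab' ha'b.symm h₁ hlt (hside.1 ⟨h₁, h₂⟩).2
  · rcases (hne hab').lt_or_gt with h₂ | h₂
    · have h₃ : ¬ f b' < f a' := fun h => (hside.2 ⟨h₂, h⟩).1.not_gt h₁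
      exact hf.not_cross ha'b.symm hab' h₁ haa' ((not_lt.1 h₃).lt_of_ne (hne ha'b'))
    · exact hf.not_cross hab.symm ha'b'.symm hlt h₂ haa'

theorem encard_commonNeighbors_le_two (hf : IsOnePageLayout G f) {a a' : V} (ha : a ≠ a') :
    (G.commonNeighbors a a').encard ≤ 2 := by
  have hinj : Set.InjOn (fun b => f b ∈ Set.uIoo (f a) (f a')) (G.commonNeighbors a a') :=
    fun b hb b' hb' h => hf.eq_of_mem_commonNeighbors ha hb hb' (iff_of_eq h)
  calc (G.commonNeighbors a a').encard
      ≤ (Set.univ : Set Prop).encard :=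
        Set.encard_le_encard_of_injOn (Set.mapsTo_univ _ _) hinj
    _ = 2 := by simp [Set.encard_univ]

theorem outerplanar (hf : IsOnePageLayout G f) : Outerplanar G := by
  constructor <;> intro hminor
  · obtain ⟨g, hg⟩ := hf.exists_of_isMinor hminor
    exact IsContained.not_cliqueFree (.refl K4) hg.cliqueFree_four
  · obtain ⟨g, hg⟩ := hf.exists_of_isMinor hminor
    have hcommon : K23.commonNeighbors (Sum.inl 0) (Sum.inl 1) = Set.range Sum.inr := by
      ext (i | j) <;> simp [mem_commonNeighbors, K23]
    have hcard := hg.encard_commonNeighbors_le_two (Sum.inl_injective.ne (zero_ne_one' (Fin 2)))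
    rw [hcommon, ← Set.image_univ, Sum.inr_injective.encard_image, Set.encard_univ] at hcard
    rw [ENat.card_eq_coe_fintype_card, Fintype.card_fin] at hcard
    exact absurd hcard (by norm_num)

end IsOnePageLayout

end OnePageLayout

section UnorderedInterval

variable {α : Type*} [LinearOrder α] {a b m : α}

theorem uIoo_subset_uIoo_of_mem (hm : m ∈ Set.uIoo a b) : Set.uIoo a m ⊆ Set.uIoo a b :=
  Set.Ioo_subset_Ioo (le_inf inf_le_left hm.1.le) (sup_le le_sup_left hm.2.le)

theorem disjoint_uIoo_of_mem (hm : m ∈ Set.uIoo a b) : Disjoint (Set.uIoo a m) (Set.uIoo b m) := by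
  wlog hab : a ≤ b generalizing a b
  · exact (this (Set.uIoo_comm a b ▸ hm) (le_of_not_ge hab)).symm
  rw [Set.uIoo_of_le hab] at hm
  rw [Set.uIoo_of_lt hm.1, Set.uIoo_of_gt hm.2, Set.disjoint_left]
  exact fun _ hx hx' => hx.2.not_gt hx'.1

theorem add_div_two_mem_uIoo {K : Type*} [Field K] [LinearOrder K] [IsStrictOrderedRing K]
    {a b : K} (hab : a ≠ b) : (a + b) / 2 ∈ Set.uIoo a b := by
  wlog h : a < b generalizing a b
  · rw [add_comm, Set.uIoo_comm]
    exact this hab.symm (hab.lt_or_gt.resolve_left h)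
  exact Set.mem_uIoo_of_lt (left_lt_add_div_two.2 h) (add_div_two_lt_right.2 h)

end UnorderedInterval

section Spans

/-- The positions of the two ends of the base edge of the triangle at node `σ` of `𝒬_k`, in the
order of `qbase`. They do not depend on `k`. -/
def qEnds : List Bool → ℚ × ℚ
  | [] => (0, 1)
  | b :: σ => (if b then (qEnds σ).2 else (qEnds σ).1, ((qEnds σ).1 + (qEnds σ).2) / 2)

/-- The position of the apex of the triangle at node `σ` of `𝒬_k`. -/
def qApex (σ : List Bool) : ℚ :=
  ((qEnds σ).1 + (qEnds σ).2) / 2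

/-- The open interval underneath the base edge of the triangle at node `σ` of `𝒬_k`. -/
def qSpan (σ : List Bool) : Set ℚ :=
  Set.uIoo (qEnds σ).1 (qEnds σ).2

theorem qEnds_fst_ne_snd (σ : List Bool) : (qEnds σ).1 ≠ (qEnds σ).2 := by
  induction σ with
  | nil => exact zero_ne_one
  | cons b σ ih =>
    have hmem := add_div_two_mem_uIoo ih
    cases b with
    | false => exact (ne_of_mem_of_not_mem hmem Set.left_notMem_uIoo).symm
    | true => exact (ne_of_mem_of_not_mem hmem Set.right_notMem_uIoo).symm

theorem qApex_mem_qSpan (σ : List Bool) : qApex σ ∈ qSpan σ :=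
  add_div_two_mem_uIoo (qEnds_fst_ne_snd σ)

theorem qApex_notMem_qSpan_cons (b : Bool) (σ : List Bool) : qApex σ ∉ qSpan (b :: σ) :=
  Set.right_notMem_uIoo

theorem qSpan_cons_subset (b : Bool) (σ : List Bool) : qSpan (b :: σ) ⊆ qSpan σ := by
  cases b with
  | false => exact uIoo_subset_uIoo_of_mem (qApex_mem_qSpan σ)
  | true =>
    have hmem := qApex_mem_qSpan σ
    rw [qSpan, Set.uIoo_comm] at hmem
    exact (uIoo_subset_uIoo_of_mem hmem).trans_eq (Set.uIoo_comm _ _)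

theorem disjoint_qSpan_cons (b : Bool) (σ : List Bool) :
    Disjoint (qSpan (b :: σ)) (qSpan ((!b) :: σ)) := by
  have h : Disjoint (qSpan (false :: σ)) (qSpan (true :: σ)) :=
    disjoint_uIoo_of_mem (qApex_mem_qSpan σ)
  cases b
  · exact h
  · exact h.symm

theorem qSpan_subset_of_suffix {σ τ : List Bool} (h : σ <:+ τ) : qSpan τ ⊆ qSpan σ := by
  obtain ⟨ρ, rfl⟩ := h
  induction ρ with
  | nil => exact subset_rfl
  | cons b ρ ih => exact (qSpan_cons_subset b (ρ ++ σ)).trans ih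

theorem suffix_or_suffix_or_diverge (σ τ : List Bool) :
    σ <:+ τ ∨ τ <:+ σ ∨ ∃ ρ b, b :: ρ <:+ σ ∧ (!b) :: ρ <:+ τ := by
  induction σ with
  | nil => exact Or.inl τ.nil_suffix
  | cons a σ ih =>
    rcases ih with ⟨ρ, rfl⟩ | hτσ | ⟨ρ, b, hσ, hτ⟩
    · rcases ρ.eq_nil_or_concat with rfl | ⟨ρ, c, rfl⟩
      · exact Or.inr (Or.inl (List.suffix_cons a σ))
      · rw [List.concat_append]
        by_cases hca : c = a
        · exact Or.inl ⟨ρ, by rw [hca]⟩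
        · exact Or.inr (Or.inr ⟨σ, a, List.suffix_rfl, ρ, by rw [Bool.eq_not_of_ne hca]⟩)
    · exact Or.inr (Or.inl (hτσ.trans (List.suffix_cons a σ)))
    · exact Or.inr (Or.inr ⟨ρ, b, hσ.trans (List.suffix_cons a σ), hτ⟩)

theorem disjoint_qSpan_of_diverge {σ τ ρ : List Bool} {b : Bool} (hσ : b :: ρ <:+ σ)
    (hτ : (!b) :: ρ <:+ τ) : Disjoint (qSpan σ) (qSpan τ) :=
  (disjoint_qSpan_cons b ρ).mono (qSpan_subset_of_suffix hσ) (qSpan_subset_of_suffix hτ)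

theorem qSpan_laminar (σ τ : List Bool) :
    qSpan τ ⊆ qSpan σ ∨ qSpan σ ⊆ qSpan τ ∨ Disjoint (qSpan σ) (qSpan τ) := by
  rcases suffix_or_suffix_or_diverge σ τ with h | h | ⟨ρ, b, hσ, hτ⟩
  · exact Or.inl (qSpan_subset_of_suffix h)
  · exact Or.inr (Or.inl (qSpan_subset_of_suffix h))
  · exact Or.inr (Or.inr (disjoint_qSpan_of_diverge hσ hτ))

theorem eq_of_suffix_of_qApex_eq {σ τ : List Bool} (h : σ <:+ τ) (hapex : qApex σ = qApex τ) :
    σ = τ := by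
  obtain ⟨ρ, rfl⟩ := h
  rcases ρ.eq_nil_or_concat with rfl | ⟨ρ, c, rfl⟩
  · rfl
  · have hsub : qSpan (ρ.concat c ++ σ) ⊆ qSpan (c :: σ) :=
      qSpan_subset_of_suffix ⟨ρ, by rw [List.concat_append]⟩
    exact absurd (hsub (hapex ▸ qApex_mem_qSpan _)) (qApex_notMem_qSpan_cons c σ)

theorem qApex_injective : Function.Injective qApex := by
  intro σ τ hapex
  rcases suffix_or_suffix_or_diverge σ τ with h | h | ⟨ρ, b, hσ, hτ⟩
  · exact eq_of_suffix_of_qApex_eq h hapex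
  · exact (eq_of_suffix_of_qApex_eq h hapex.symm).symm
  · exact absurd (hapex ▸ qApex_mem_qSpan τ)
      (Set.disjoint_left.1 (disjoint_qSpan_of_diverge hσ hτ) (qApex_mem_qSpan σ))

theorem qApex_mem_Ioo (σ : List Bool) : qApex σ ∈ Set.Ioo (0 : ℚ) 1 := by
  have h := qSpan_subset_of_suffix σ.nil_suffix (qApex_mem_qSpan σ)
  rwa [qSpan, qEnds, Set.uIoo_of_lt zero_lt_one] at h

end Spans

section Layout

variable {k : ℕ}

/-- The position on the line of each vertex of `𝒬_k`. -/
def qPos (k : ℕ) : QVert k → ℚ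
  | Sum.inl false => 0
  | Sum.inl true => 1
  | Sum.inr σ => qApex σ

theorem qPos_qbase {σ : List Bool} (hσ : σ.length ≤ k) :
    qPos k (qbase k σ).1 = (qEnds σ).1 ∧ qPos k (qbase k σ).2 = (qEnds σ).2 := by
  induction σ with
  | nil => exact ⟨rfl, rfl⟩
  | cons b σ ih =>
    have hlt : σ.length < k := hσ
    obtain ⟨hfst, hsnd⟩ := ih hlt.le
    constructor
    · cases b <;> assumption
    · simp only [qbase, hlt, dite_true]
      rfl

theorem qPos_injective (k : ℕ) : Function.Injective (qPos k) := by
  rintro (b | σ) (c | τ) h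
  · cases b <;> cases c <;> simp_all [qPos]
  · have := qApex_mem_Ioo τ
    cases b <;> simp_all [qPos]
  · have := qApex_mem_Ioo σ
    cases c <;> simp_all [qPos]
  · exact congrArg Sum.inr (Subtype.ext (qApex_injective h))

theorem exists_qbase_of_adj {u v : QVert k} (huv : (Qgraph k).Adj u v) :
    ∃ σ : List Bool, σ.length ≤ k ∧ s(u, v) = s((qbase k σ).1, (qbase k σ).2) := by
  rw [Qgraph, fromEdgeSet_adj] at huv
  obtain ⟨h | ⟨σ, hσ, h | h⟩, -⟩ := huv
  · exact ⟨[], k.zero_le, h⟩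
  · exact ⟨false :: σ, hσ, by simp [h, qbase, hσ, Sym2.eq_swap]⟩
  · exact ⟨true :: σ, hσ, by simp [h, qbase, hσ, Sym2.eq_swap]⟩

theorem exists_uIoo_eq_qSpan_of_adj {u v : QVert k} (huv : (Qgraph k).Adj u v) :
    ∃ σ, Set.uIoo (qPos k u) (qPos k v) = qSpan σ := by
  obtain ⟨σ, hσ, h⟩ := exists_qbase_of_adj huv
  obtain ⟨hfst, hsnd⟩ := qPos_qbase hσ
  refine ⟨σ, ?_⟩
  rw [qSpan, ← hfst, ← hsnd]
  rcases Sym2.eq_iff.1 h with ⟨rfl, rfl⟩ | ⟨rfl, rfl⟩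
  · rfl
  · exact Set.uIoo_comm _ _

theorem isOnePageLayout_qPos (k : ℕ) : IsOnePageLayout (Qgraph k) (qPos k) := by
  refine ⟨qPos_injective k, fun u v x y huv hxy hux hxv hvy => ?_⟩
  obtain ⟨σ, hσ⟩ := exists_uIoo_eq_qSpan_of_adj huv
  obtain ⟨τ, hτ⟩ := exists_uIoo_eq_qSpan_of_adj hxy
  have huv_lt := hux.trans hxv
  have hxy_lt := hxv.trans hvy
  rw [Set.uIoo_of_lt huv_lt] at hσ
  rw [Set.uIoo_of_lt hxy_lt] at hτ
  have hlaminar := qSpan_laminar σ τ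
  rw [← hσ, ← hτ, Set.Ioo_subset_Ioo_iff hxy_lt, Set.Ioo_subset_Ioo_iff huv_lt,
    Set.Ioo_disjoint_Ioo] at hlaminar
  rcases hlaminar with ⟨-, hyv⟩ | ⟨hxu, -⟩ | hvx
  · exact hyv.not_gt hvy
  · exact hxu.not_gt hux
  · rw [min_eq_left hvy.le, max_eq_right hux.le] at hvx
    exact hvx.not_gt hxv

end Layout

/-- For every positive integer `k`, the graph `𝒬_k` is outerplanar;
consequently neither `K₄` nor `K_{2,3}` is a minor of `𝒬_k`. -/
theorem Qk_outerplanar (k : ℕ) (hk : 0 < k) :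
    Outerplanar (Qgraph k) ∧ ¬ IsMinor K4 (Qgraph k) ∧ ¬ IsMinor K23 (Qgraph k) := by
  have houter : Outerplanar (Qgraph k) := (isOnePageLayout_qPos k).outerplanar
  exact ⟨houter, houter⟩
end

section
/- For every positive integer k, neither the graph A nor the graph C_{3,2} is a minor of 𝒫_k. -/
/-!
Common definitions: minors, widths, connectivity, the specific graphs
`K4`, `K23`, `C32`, `graphA`, the binary trees `CT_h`, the graphs `𝒫_k`, `𝒬_k`,
the trees `T_h`, homeomorphic embeddings, cascades, and related notions,
following Dang--Thomas, "Minors of two-connected graphs of large path-width".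
-/

open SimpleGraph

/-!
If `H` is a minor of `G` and `v` is a vertex of `G`, then `v` lies in at most one branch set, so
`H` minus a suitable vertex is a minor of `G` minus `v`. Minors of forests are forests, because an
edge of `G` realizing an edge `e` of `H` is a bridge of `G`, and a walk of `H` avoiding `e` would
lift to a walk of `G` avoiding that edge. Deleting the extra vertex of `𝒫_k` leaves a tree, but
deleting any single vertex of `A` or of `C_{3,2}` leaves a triangle.
-/

namespace IsMinorModel

variable {V W : Type*} {G : SimpleGraph V} {H : SimpleGraph W} {f : W → Set V}

theorem nonempty (hf : IsMinorModel H G f) (a : W) : (f a).Nonempty :=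
  hf.1 a

theorem connected (hf : IsMinorModel H G f) (a : W) : (G.induce (f a)).Connected :=
  hf.2.1 a

theorem disjoint (hf : IsMinorModel H G f) {a b : W} (hab : a ≠ b) : Disjoint (f a) (f b) :=
  hf.2.2.1 a b hab

theorem exists_adj (hf : IsMinorModel H G f) {a b : W} (hab : H.Adj a b) :
    ∃ x ∈ f a, ∃ y ∈ f b, G.Adj x y :=
  hf.2.2.2 a b hab

theorem eq_of_mem (hf : IsMinorModel H G f) {a b : W} {x : V} (ha : x ∈ f a) (hb : x ∈ f b) :
    a = b :=
  of_not_not fun hab ↦ Set.disjoint_left.mp (hf.disjoint hab) ha hb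

theorem reachable_of_mem (hf : IsMinorModel H G f) {a : W} {x y : V} (hx : x ∈ f a)
    (hy : y ∈ f a) : G.Reachable x y :=
  ((hf.connected a).preconnected ⟨x, hx⟩ ⟨y, hy⟩).map (SimpleGraph.Embedding.induce (f a)).toHom

theorem reachable (hf : IsMinorModel H G f) {a b : W} (hab : H.Reachable a b) {x y : V}
    (hx : x ∈ f a) (hy : y ∈ f b) : G.Reachable x y := by
  obtain ⟨p⟩ := hab
  induction p generalizing x with
  | nil => exact hf.reachable_of_mem hx hy
  | cons hadj _ ih =>
    obtain ⟨p, hp, q, hq, hpq⟩ := hf.exists_adj hadj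
    exact (hf.reachable_of_mem hx hp).trans (hpq.reachable.trans (ih hq hy))

theorem deleteEdges_singleton (hf : IsMinorModel H G f) {a b : W} (hab : a ≠ b) {x y : V}
    (hx : x ∈ f a) (hy : y ∈ f b) :
    IsMinorModel (H.deleteEdges {s(a, b)}) (G.deleteEdges {s(x, y)}) f := by
  refine ⟨hf.nonempty, fun w ↦ ?_, fun _ _ ↦ hf.disjoint, fun c d hcd ↦ ?_⟩
  · have induce_eq : (G.deleteEdges {s(x, y)}).induce (f w) = G.induce (f w) := by
      ext ⟨p, hp⟩ ⟨q, hq⟩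
      have hpq : s(p, q) ≠ s(x, y) := by
        rw [Ne, Sym2.eq_iff]
        rintro (⟨rfl, rfl⟩ | ⟨rfl, rfl⟩)
        · exact hab ((hf.eq_of_mem hx hp).trans (hf.eq_of_mem hq hy))
        · exact hab ((hf.eq_of_mem hx hq).trans (hf.eq_of_mem hp hy))
      simp [hpq]
    exact induce_eq ▸ hf.connected w
  · rw [deleteEdges_adj, Set.mem_singleton_iff] at hcd
    obtain ⟨p, hp, q, hq, hpq⟩ := hf.exists_adj hcd.1
    refine ⟨p, hp, q, hq, deleteEdges_adj.mpr ⟨hpq, fun h ↦ hcd.2 ?_⟩⟩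
    rw [Set.mem_singleton_iff, Sym2.eq_iff] at h
    obtain ⟨rfl, rfl⟩ | ⟨rfl, rfl⟩ := h
    · rw [hf.eq_of_mem hp hx, hf.eq_of_mem hq hy]
    · rw [hf.eq_of_mem hp hy, hf.eq_of_mem hq hx, Sym2.eq_swap]

theorem induce (hf : IsMinorModel H G f) {s : Set W} {t : Set V} (hst : ∀ w ∈ s, f w ⊆ t) :
    IsMinorModel (H.induce s) (G.induce t) fun w ↦ Subtype.val ⁻¹' f w := by
  refine ⟨fun w ↦ ?_, fun w ↦ ?_, fun a b hab ↦ ?_, fun a b hab ↦ ?_⟩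
  · obtain ⟨x, hx⟩ := hf.nonempty w
    exact ⟨⟨x, hst w w.2 hx⟩, hx⟩
  · let φ : G.induce (f w) →g (G.induce t).induce (Subtype.val ⁻¹' f w) :=
      ⟨fun x ↦ ⟨⟨x, hst w w.2 x.2⟩, x.2⟩, id⟩
    exact (hf.connected w).map φ fun x ↦ ⟨⟨x, x.2⟩, rfl⟩
  · exact (hf.disjoint (Subtype.coe_ne_coe.mpr hab)).preimage _
  · obtain ⟨x, hx, y, hy, hxy⟩ := hf.exists_adj hab
    exact ⟨⟨x, hst a a.2 hx⟩, hx, ⟨y, hst b b.2 hy⟩, hy, hxy⟩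

end IsMinorModel

/-- `G` is an apex forest: deleting some vertex of `G` leaves a forest. In particular `G` has at
least one vertex. -/
def IsApexForest {V : Type*} (G : SimpleGraph V) : Prop :=
  ∃ v, (G.induce {v}ᶜ).IsAcyclic

namespace IsMinor

variable {V W : Type*} {G : SimpleGraph V} {H : SimpleGraph W}

theorem isAcyclic (hHG : IsMinor H G) (hG : G.IsAcyclic) : H.IsAcyclic := by
  obtain ⟨f, hf⟩ := hHG
  refine isAcyclic_iff_forall_adj_isBridge.mpr fun a b hab hreach ↦ ?_
  obtain ⟨x, hx, y, hy, hxy⟩ := hf.exists_adj hab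
  have hbridge : G.IsBridge s(x, y) := isAcyclic_iff_forall_adj_isBridge.mp hG hxy
  exact hbridge ((hf.deleteEdges_singleton hab.ne hx hy).reachable hreach hx hy)

theorem exists_induce_compl_singleton [Nonempty W] (hHG : IsMinor H G) (v : V) :
    ∃ w, IsMinor (H.induce {w}ᶜ) (G.induce {v}ᶜ) := by
  obtain ⟨f, hf⟩ := hHG
  obtain ⟨w, hw⟩ : ∃ w, ∀ a, v ∈ f a → a = w := by
    by_cases hv : ∃ w, v ∈ f w
    · obtain ⟨w, hw⟩ := hv
      exact ⟨w, fun a ha ↦ hf.eq_of_mem ha hw⟩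
    · exact ⟨Classical.arbitrary W, fun a ha ↦ (hv ⟨a, ha⟩).elim⟩
  exact ⟨w, _, hf.induce fun a ha ↦ Set.subset_compl_singleton_iff.mpr fun hv ↦ ha (hw a hv)⟩

theorem isApexForest [Nonempty W] (hHG : IsMinor H G) (hG : IsApexForest G) :
    IsApexForest H := by
  obtain ⟨v, hv⟩ := hG
  exact (hHG.exists_induce_compl_singleton v).imp fun _ hw ↦ hw.isAcyclic hv

end IsMinor

theorem cliqueFree_three_of_isAcyclic {V : Type*} {G : SimpleGraph V} (hG : G.IsAcyclic) :
    G.CliqueFree 3 := by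
  intro s hs
  obtain ⟨a, c, hc, -⟩ := is3Clique_iff_exists_cycle_length_three.mp ⟨s, hs⟩
  exact hG c hc

theorem IsApexForest.exists_mem_of_is3Clique {V : Type*} {G : SimpleGraph V}
    (hG : IsApexForest G) : ∃ v, ∀ s : Finset V, G.IsNClique 3 s → v ∈ s := by
  obtain ⟨v, hv⟩ := hG
  refine ⟨v, fun s hs ↦ of_not_not fun hvs ↦ ?_⟩
  have hfree : G.CliqueFreeOn {v}ᶜ 3 :=
    (cliqueFree_induce_iff ..).mp (cliqueFree_three_of_isAcyclic hv)
  exact hfree (Set.subset_compl_singleton_iff.mpr hvs) hs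

theorem isAcyclic_of_forall_subsingleton_lower_neighbors {V α : Type*} [LinearOrder α]
    {G : SimpleGraph V} (r : V → α) (h : ∀ v, {u | G.Adj v u ∧ r u ≤ r v}.Subsingleton) :
    G.IsAcyclic := by
  intro v c hc
  -- Both cycle neighbours of a vertex of maximal value on the cycle are lower neighbours of it.
  obtain ⟨m, hm, hmax⟩ :=
    Set.exists_max_image {x | x ∈ c.support} r c.support.finite_toSet ⟨v, c.start_mem_support⟩
  have hsub : c.toSubgraph.neighborSet m ⊆ {u | G.Adj m u ∧ r u ≤ r m} := fun u hu ↦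
    ⟨hu.adj_sub, hmax u (c.mem_verts_toSubgraph.mp hu.snd_mem)⟩
  obtain ⟨x, y, hxy, hpair⟩ := Set.ncard_eq_two.mp (hc.ncard_neighborSet_toSubgraph_eq_two hm)
  exact hxy (h m (hsub (by simp [hpair])) (hsub (by simp [hpair])))

theorem exists_eq_cons_of_Pgraph_adj {k : ℕ} {u v : CTVert k}
    (h : (Pgraph k).Adj (some u) (some v)) : (∃ b, v.1 = b :: u.1) ∨ ∃ b, u.1 = b :: v.1 := by
  rw [Pgraph, fromEdgeSet_adj] at h
  obtain ⟨⟨b, σ, hσ, he⟩ | ⟨l, -, he⟩, -⟩ := h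
  · simp only [Sym2.eq_iff, Option.some.injEq] at he
    obtain ⟨rfl, rfl⟩ | ⟨rfl, rfl⟩ := he
    · exact .inl ⟨b, rfl⟩
    · exact .inr ⟨b, rfl⟩
  · simp at he

theorem eq_tail_of_Pgraph_adj {k : ℕ} {u v : CTVert k} (h : (Pgraph k).Adj (some u) (some v))
    (hle : v.1.length ≤ u.1.length) : v.1 = u.1.tail := by
  obtain ⟨b, hb⟩ | ⟨b, hb⟩ := exists_eq_cons_of_Pgraph_adj h
  · simp [hb] at hle
  · simp [hb]

theorem isAcyclic_Pgraph_induce_compl_none (k : ℕ) :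
    ((Pgraph k).induce {none}ᶜ).IsAcyclic := by
  refine isAcyclic_of_forall_subsingleton_lower_neighbors (fun v ↦ v.1.elim 0 fun σ ↦ σ.1.length) ?_
  rintro ⟨_ | σ, hσ⟩ ⟨_ | τ, hτ⟩ ⟨hστ, hτσ⟩ ⟨_ | ρ, hρ⟩ ⟨hσρ, hρσ⟩
  case some.some.some =>
    obtain rfl : τ = ρ :=
      Subtype.ext ((eq_tail_of_Pgraph_adj hστ hτσ).trans (eq_tail_of_Pgraph_adj hσρ hρσ).symm)
    rfl
  all_goals contradiction

theorem not_isApexForest_graphA : ¬ IsApexForest graphA := by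
  intro h
  obtain ⟨v, hv⟩ := h.exists_mem_of_is3Clique
  have h012 : v ∈ ({0, 1, 2} : Finset (Fin 6)) := hv _ (by simp [is3Clique_triple_iff, graphA])
  have h234 : v ∈ ({2, 3, 4} : Finset (Fin 6)) := hv _ (by simp [is3Clique_triple_iff, graphA])
  have h450 : v ∈ ({4, 5, 0} : Finset (Fin 6)) := hv _ (by simp [is3Clique_triple_iff, graphA])
  clear hv h
  revert v
  decide

theorem not_isApexForest_C32 : ¬ IsApexForest C32 := by
  intro h
  obtain ⟨v, hv⟩ := h.exists_mem_of_is3Clique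
  have htriangle (i : Fin 2) : v ∈ ({(i, 0), (i, 1), (i, 2)} : Finset (Fin 2 × Fin 3)) :=
    hv _ (by simp [is3Clique_triple_iff, C32])
  have hfst (i : Fin 2) : v.1 = i := by
    have := htriangle i
    aesop
  exact zero_ne_one ((hfst 0).symm.trans (hfst 1))

/-- For every positive integer `k`, neither the graph `A` nor the graph
`C_{3,2}` is a minor of `𝒫_k`. -/
theorem Pk_has_no_A_or_C32_minor (k : ℕ) (hk : 0 < k) :
    ¬ IsMinor graphA (Pgraph k) ∧ ¬ IsMinor C32 (Pgraph k) := by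
  have hP : IsApexForest (Pgraph k) := ⟨none, isAcyclic_Pgraph_induce_compl_none k⟩
  exact ⟨fun h ↦ not_isApexForest_graphA (h.isApexForest hP),
    fun h ↦ not_isApexForest_C32 (h.isApexForest hP)⟩
end
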